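/- For every fixed α ∈ (0,1/2), as n → ∞ over odd n, the conditional Shannon entropy H(maj(X^n) | Y^n) converges to E[h(Q(|G|(1 − 2α)/√(4α(1 − α))))], where G is a standard Gaussian random variable and Q(t) := P[G > t] is the Gaussian tail function. -/

import Mathlib

/-!
Since `Y^n` is uniform, the conditional entropy is the average over `y` of `h(p(y))`, where
`p(y) = P[maj(X^n) = 1 | Y^n = y]` (`condEntBool_eq`).

Given `Y^n = y`, the `±1`-sum of `X^n` is a sum of independent variables with mean
`(1 - 2α) ∑ i, ± 1` (signs from `y`) and variance `4α(1 - α) n`. Comparing characteristic functions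
factor by factor (`exists_stepChar_bound`, `tendsto_charFun_law`) and applying Lévy's continuity
theorem, the standardised sum is asymptotically standard Gaussian along every sequence of
conditioning vectors (`tendsto_law`). Via the Lévy–Prokhorov metric this becomes convergence of all
tail probabilities, uniformly in `y` and in the threshold (`uniform_tail`). Hence `p(y)` is
uniformly close to `Q(-c U(y))`, where `U(y)` is the `±1`-sum of `y` over `√n` and
`c = (1 - 2α) / √(4α(1 - α))`.

The same limit theorem with `α = 1/2` says that `U(Y^n)` converges in distribution to `G`, so the
average of the bounded continuous function `u ↦ h(Q(-c u))` converges to its Gaussian expectation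
(`tendsto_sum_entropy`). The symmetry `h(p) = h(1 - p)` turns `Q(-c u)` into `Q(c |u|)`.
-/

open Finset MeasureTheory

noncomputable section

/-- Conditional probability that coordinate `k` equals `true` given the coordinates
before `k`, under the (possibly unnormalized) pmf `μ` on `{0,1}^n`. -/
def condQ {n : ℕ} (μ : (Fin n → Bool) → ℝ) (k : Fin n) (x : Fin n → Bool) : ℝ :=
  (∑ y ∈ Finset.univ.filter
      (fun y : Fin n → Bool => (∀ i : Fin n, i < k → y i = x i) ∧ y k = true), μ y) /
  (∑ y ∈ Finset.univ.filter
      (fun y : Fin n → Bool => ∀ i : Fin n, i < k → y i = x i), μ y)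

/-- The `k`-th term `E[Q_k (1 - Q_k)]` of the sequential mean squared error. -/
def smseTerm {n : ℕ} (μ : (Fin n → Bool) → ℝ) (k : Fin n) : ℝ :=
  ∑ x : Fin n → Bool, μ x * (condQ μ k x * (1 - condQ μ k x))

/-- The sequential mean squared error `M(U^n) = Σ_k E[Q_k (1 - Q_k)]`. -/
def smse {n : ℕ} (μ : (Fin n → Bool) → ℝ) : ℝ := ∑ k : Fin n, smseTerm μ k

/-- The uniform pmf on `{0,1}^n`. -/
def unif (n : ℕ) : (Fin n → Bool) → ℝ := fun _ => ((2 : ℝ) ^ n)⁻¹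

/-- The SMSE of `μ` given the side information `b` :
`M(X^n | b(X^n)) = Σ_c Σ_k E[Q_k (1-Q_k)]` where `Q_k = P[X_k = 1 | X^{k-1}, b(X^n)]`. -/
def condSMSE {n : ℕ} (μ : (Fin n → Bool) → ℝ) (b : (Fin n → Bool) → Bool) : ℝ :=
  ∑ c : Bool, smse (fun x => if b x = c then μ x else 0)

/-- Hamming weight. -/
def hw {n : ℕ} (x : Fin n → Bool) : ℕ := (Finset.univ.filter (fun i => x i = true)).card

/-- The majority function: `1` iff the Hamming weight exceeds `n/2`. -/
def majF (n : ℕ) : (Fin n → Bool) → Bool := fun x => decide (n < 2 * hw x)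

/-- The joint pmf `y ↦ P[Y^n = y, b(X^n) = c]` where `X^n` is uniform and
`Y^n = X^n ⊕ Z^n` with `Z^n` i.i.d. Bernoulli(α). -/
def noisyPMF (n : ℕ) (α : ℝ) (b : (Fin n → Bool) → Bool) (c : Bool) :
    (Fin n → Bool) → ℝ :=
  fun y => ∑ x : Fin n → Bool,
    if b x = c then ((2 : ℝ) ^ n)⁻¹ * ∏ i : Fin n, (if y i = x i then 1 - α else α) else 0

/-- The noisy SMSE `M(Y^n | b(X^n))`. -/
def noisySMSE (n : ℕ) (α : ℝ) (b : (Fin n → Bool) → Bool) : ℝ :=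
  ∑ c : Bool, smse (noisyPMF n α b c)

/-- The binary entropy function (base 2). -/
def binEnt (p : ℝ) : ℝ := -(p * Real.logb 2 p) - (1 - p) * Real.logb 2 (1 - p)

/-- `μ(α) = h(arccos(1-2α)/π)`. -/
def muF (α : ℝ) : ℝ := binEnt (Real.arccos (1 - 2 * α) / Real.pi)

/-- Base-2 Shannon entropy of a pmf on a finite type. -/
def entropy {β : Type*} [Fintype β] (p : β → ℝ) : ℝ := ∑ x : β, -(p x * Real.logb 2 (p x))

open scoped Classical in
/-- Pushforward pmf along `f`. -/
def push {β γ : Type*} [Fintype β] (μ : β → ℝ) (f : β → γ) : γ → ℝ :=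
  fun c => ∑ x ∈ Finset.univ.filter (fun x => f x = c), μ x

/-- The pmf of a majority random vector: uniform on `{v : w(v) > n/2}`. -/
def majPMF (n : ℕ) : (Fin n → Bool) → ℝ :=
  fun v => if n < 2 * hw v then
    (((Finset.univ.filter (fun u : Fin n → Bool => n < 2 * hw u)).card : ℝ))⁻¹ else 0

/-- Standard Gaussian density. -/
def stdPdf (t : ℝ) : ℝ := Real.exp (-(t ^ 2) / 2) / Real.sqrt (2 * Real.pi)

/-- Gaussian tail function `Q(u) = P[G > u]`. -/
def gaussQ (u : ℝ) : ℝ := ∫ s in Set.Ioi u, stdPdf s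

/-- Base-2 conditional Shannon entropy `H(C | Y)` for the joint pmf `J`. -/
def condEntBool {β : Type*} [Fintype β] (J : β → Bool → ℝ) : ℝ :=
  ∑ y : β, ∑ c : Bool, -(J y c * Real.logb 2 (J y c / (∑ c' : Bool, J y c')))

end

open ProbabilityTheory Filter Topology

noncomputable section

/-! ### The normalised sum of the channel input, conditionally on the output -/

/-- The `±1` value of a bit: `true ↦ 1`, `false ↦ -1`. -/
def sg (b : Bool) : ℝ := if b then 1 else -1

/-- The conditional probability `P[X^n = x | Y^n = y]`, which for uniform `X^n` equals
`P[Y^n = y | X^n = x]`. -/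
def chanWt {n : ℕ} (α : ℝ) (y x : Fin n → Bool) : ℝ :=
  ∏ i, if y i = x i then 1 - α else α

/-- The `±1`-sum of `x`, standardised to have mean `0` and variance `1` under `chanWt α y`.
For `n = 0` the division by zero makes it `0`. -/
def stat {n : ℕ} (α : ℝ) (y x : Fin n → Bool) : ℝ :=
  (∑ i, (sg (x i) - (1 - 2 * α) * sg (y i))) / (√n * √(4 * α * (1 - α)))

/-- The distribution of `stat α y X^n` conditionally on `Y^n = y`. -/
def law {n : ℕ} (α : ℝ) (y : Fin n → Bool) : Measure ℝ :=
  ∑ x, ENNReal.ofReal (chanWt α y x) • Measure.dirac (stat α y x)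

lemma sum_prod_bool {R : Type*} [CommSemiring R] {n : ℕ} (f : Fin n → Bool → R) :
    ∑ x : Fin n → Bool, ∏ i, f i (x i) = ∏ i, (f i true + f i false) := by
  rw [← Fintype.piFinset_univ, ← Finset.prod_univ_sum]
  simp

lemma chanWt_nonneg {n : ℕ} {α : ℝ} (h0 : 0 ≤ α) (h1 : α ≤ 1) (y x : Fin n → Bool) :
    0 ≤ chanWt α y x :=
  Finset.prod_nonneg fun i _ => by split_ifs <;> linarith

lemma sum_chanWt {n : ℕ} (α : ℝ) (y : Fin n → Bool) : ∑ x, chanWt α y x = 1 := by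
  unfold chanWt
  rw [sum_prod_bool (fun i b => if y i = b then 1 - α else α)]
  refine Finset.prod_eq_one fun i _ => ?_
  cases y i <;> simp

lemma isProbabilityMeasure_law {n : ℕ} {α : ℝ} (h0 : 0 ≤ α) (h1 : α ≤ 1) (y : Fin n → Bool) :
    IsProbabilityMeasure (law α y) := by
  constructor
  simp only [law, Measure.coe_finsetSum, Finset.sum_apply, Measure.smul_apply, measure_univ,
    smul_eq_mul, mul_one]
  rw [← ENNReal.ofReal_sum_of_nonneg fun x _ => chanWt_nonneg h0 h1 y x, sum_chanWt,
    ENNReal.ofReal_one]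

lemma integral_law {E : Type*} [NormedAddCommGroup E] [NormedSpace ℝ E] [CompleteSpace E]
    {n : ℕ} {α : ℝ} (h0 : 0 ≤ α) (h1 : α ≤ 1)
    (y : Fin n → Bool) (f : ℝ → E) :
    ∫ t, f t ∂law α y = ∑ x, chanWt α y x • f (stat α y x) := by
  unfold law
  rw [integral_finsetSum_measure fun x _ =>
    (integrable_dirac (by simp)).smul_measure ENNReal.ofReal_ne_top]
  simp [integral_smul_measure, ENNReal.toReal_ofReal (chanWt_nonneg h0 h1 y _)]

lemma law_real {n : ℕ} {α : ℝ} (h0 : 0 ≤ α) (h1 : α ≤ 1)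
    (y : Fin n → Bool) {s : Set ℝ} (hs : MeasurableSet s) [DecidablePred (· ∈ s)] :
    (law α y).real s = ∑ x, if stat α y x ∈ s then chanWt α y x else 0 := by
  rw [← integral_indicator_one hs, integral_law h0 h1]
  refine Finset.sum_congr rfl fun x _ => ?_
  by_cases h : stat α y x ∈ s <;> simp [h]

/-! ### Characteristic functions -/

/-- The characteristic function of one centred `±1` variable, with `P[1] = 1 - α`, scaled to unit
variance. -/
def stepChar (α r : ℝ) : ℂ :=
  (1 - α) * Complex.exp ((2 * α / √(4 * α * (1 - α)) : ℝ) * r * Complex.I)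
    + α * Complex.exp (-(2 * (1 - α) / √(4 * α * (1 - α)) : ℝ) * r * Complex.I)

/-- The summands are independent; a bit `y i = false` only reflects its summand, which shows up as
the sign `sg (y i)` in the argument. -/
lemma charFun_law {n : ℕ} {α : ℝ} (h0 : 0 ≤ α) (h1 : α ≤ 1) (y : Fin n → Bool) (t : ℝ) :
    charFun (law α y) t = ∏ i, stepChar α (sg (y i) * (t / √n)) := by
  rw [charFun_apply_real, integral_law h0 h1]
  have key : ∀ x : Fin n → Bool,
      chanWt α y x • Complex.exp (t * (stat α y x : ℝ) * Complex.I) =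
      ∏ i, ((fun (i : Fin n) (b : Bool) => ((if y i = b then 1 - α else α : ℝ) : ℂ) *
        Complex.exp (t * ((sg b - (1 - 2 * α) * sg (y i)) / (√n * √(4 * α * (1 - α))) : ℝ)
          * Complex.I)) i (x i)) := by
    intro x
    rw [Finset.prod_mul_distrib, ← Complex.exp_sum, chanWt, stat, Complex.real_smul]
    push_cast
    rw [Finset.sum_div, Finset.mul_sum, Finset.sum_mul]
  rw [Finset.sum_congr rfl fun x _ => key x]
  refine (sum_prod_bool (fun (i : Fin n) (b : Bool) =>
    ((if y i = b then 1 - α else α : ℝ) : ℂ) *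
      Complex.exp (t * ((sg b - (1 - 2 * α) * sg (y i)) / (√n * √(4 * α * (1 - α))) : ℝ)
        * Complex.I))).trans ?_
  refine Finset.prod_congr rfl fun i _ => ?_
  cases h : y i
  · simp only [sg, stepChar]
    rw [add_comm]
    simp
    congr 3 <;> ring
  · simp only [sg, stepChar]
    simp
    congr 3 <;> ring

lemma norm_prod_sub_prod_le {n : ℕ} (a b : Fin n → ℂ) (ha : ∀ i, ‖a i‖ ≤ 1)
    (hb : ∀ i, ‖b i‖ ≤ 1) : ‖∏ i, a i - ∏ i, b i‖ ≤ ∑ i, ‖a i - b i‖ := by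
  induction n with
  | zero => simp
  | succ n ih =>
    rw [Fin.prod_univ_succ, Fin.prod_univ_succ, Fin.sum_univ_succ]
    have e : a 0 * ∏ i : Fin n, a i.succ - b 0 * ∏ i : Fin n, b i.succ =
      (a 0 - b 0) * ∏ i : Fin n, a i.succ +
        b 0 * (∏ i : Fin n, a i.succ - ∏ i : Fin n, b i.succ) := by ring
    rw [e]
    refine (norm_add_le _ _).trans (add_le_add ?_ ?_)
    · rw [norm_mul, norm_prod]
      exact mul_le_of_le_one_right (norm_nonneg _)
        (Finset.prod_le_one (fun _ _ => norm_nonneg _) fun i _ => ha _)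
    · rw [norm_mul]
      exact (mul_le_of_le_one_left (norm_nonneg _) (hb 0)).trans
        (ih _ _ (fun i => ha _) fun i => hb _)

lemma norm_stepChar_le {α : ℝ} (h0 : 0 ≤ α) (h1 : α ≤ 1) (r : ℝ) : ‖stepChar α r‖ ≤ 1 := by
  unfold stepChar
  refine (norm_add_le _ _).trans ?_
  rw [norm_mul, norm_mul, ← Complex.ofReal_neg, ← Complex.ofReal_mul, ← Complex.ofReal_mul,
    Complex.norm_exp_ofReal_mul_I, Complex.norm_exp_ofReal_mul_I, ← Complex.ofReal_one,
    ← Complex.ofReal_sub, Complex.norm_real, Complex.norm_real, Real.norm_of_nonneg h0,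
    Real.norm_of_nonneg (by linarith)]
  linarith

/-- Third-order Taylor estimate: `stepChar α` and the standard Gaussian characteristic function
agree to second order at `0`. -/
lemma exists_stepChar_bound {α : ℝ} (h0 : 0 < α) (h1 : α < 1) :
    ∃ C : ℝ, 0 ≤ C ∧ ∀ r : ℝ, |r| ≤ 1 →
      ‖stepChar α r - Complex.exp (-(r : ℂ) ^ 2 / 2)‖ ≤ C * |r| ^ 3 := by
  set a : ℝ := 2 * α / √(4 * α * (1 - α)) with ha
  set b : ℝ := 2 * (1 - α) / √(4 * α * (1 - α)) with hb
  have hσ : 0 < 4 * α * (1 - α) := by nlinarith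
  have hs : √(4 * α * (1 - α)) ^ 2 = 4 * α * (1 - α) := Real.sq_sqrt hσ.le
  have hsp : 0 < √(4 * α * (1 - α)) := Real.sqrt_pos.2 hσ
  have hap : 0 ≤ a := by positivity
  have hbp : 0 ≤ b := div_nonneg (by linarith) hsp.le
  -- the scaled variable has mean `0` and variance `1`
  have m1 : (1 - α) * a - α * b = 0 := by rw [ha, hb]; ring
  have m2 : (1 - α) * a ^ 2 + α * b ^ 2 = 1 := by
    have : 1 - α ≠ 0 := by linarith
    rw [ha, hb, div_pow, div_pow, hs]
    field_simp
    ring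
  have T : ∀ z : ℂ, ‖Complex.exp z - (1 + z + z ^ 2 / 2)‖ ≤ ‖z‖ ^ 3 * Real.exp ‖z‖ := by
    intro z
    have := Complex.norm_exp_sub_sum_le_norm_mul_exp z 3
    simpa [Finset.sum_range_succ, Nat.factorial] using this
  have T2 : ∀ c : ℝ, 0 ≤ c → ∀ s : ℝ, (s = c ∨ s = -c) → ∀ r : ℝ, |r| ≤ 1 →
      ‖Complex.exp (s * r * Complex.I) -
        (1 + s * r * Complex.I + (s * r * Complex.I) ^ 2 / 2)‖ ≤ c ^ 3 * Real.exp c * |r| ^ 3 := by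
    intro c hc s hsc r hr
    refine (T _).trans ?_
    have : ‖(s : ℂ) * r * Complex.I‖ = c * |r| := by
      rcases hsc with rfl | rfl <;> simp [abs_of_nonneg hc]
    rw [this, mul_pow]
    have : c * |r| ≤ c := mul_le_of_le_one_right hc hr
    calc c ^ 3 * |r| ^ 3 * Real.exp (c * |r|) ≤ c ^ 3 * |r| ^ 3 * Real.exp c := by gcongr
      _ = _ := by ring
  refine ⟨a ^ 3 * Real.exp a + b ^ 3 * Real.exp b + Real.exp 1, by positivity, fun r hr => ?_⟩
  have E1 := T2 a hap a (.inl rfl) r hr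
  have E2 := T2 b hbp (-b) (.inr rfl) r hr
  have E3 : ‖Complex.exp (-(r : ℂ) ^ 2 / 2) - (1 + -(r : ℂ) ^ 2 / 2)‖ ≤ Real.exp 1 * |r| ^ 3 := by
    have h := Complex.norm_exp_sub_sum_le_norm_mul_exp (-(r : ℂ) ^ 2 / 2) 2
    simp only [Finset.sum_range_succ, Finset.sum_range_zero, Nat.factorial] at h
    have hn : ‖-(r : ℂ) ^ 2 / 2‖ = |r| ^ 2 / 2 := by simp
    rw [hn] at h
    have h' : ‖Complex.exp (-(r : ℂ) ^ 2 / 2) - (1 + -(r : ℂ) ^ 2 / 2)‖ ≤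
      (|r| ^ 2 / 2) ^ 2 * Real.exp (|r| ^ 2 / 2) := by simpa using h
    refine h'.trans ?_
    have p0 : 0 ≤ |r| := abs_nonneg r
    have p1 : |r| ^ 2 / 2 ≤ 1 := by nlinarith
    have p2 : (|r| ^ 2 / 2) ^ 2 ≤ |r| ^ 3 := by
      have : |r| ^ 3 * |r| ≤ |r| ^ 3 * 1 := by gcongr
      nlinarith [pow_nonneg p0 3]
    rw [mul_comm]
    gcongr
  have key : stepChar α r - Complex.exp (-(r : ℂ) ^ 2 / 2) =
      ((1 - α : ℝ) : ℂ) * (Complex.exp (a * r * Complex.I) -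
        (1 + a * r * Complex.I + (a * r * Complex.I) ^ 2 / 2)) +
      (α : ℂ) * (Complex.exp ((-b : ℝ) * r * Complex.I) -
        (1 + (-b : ℝ) * r * Complex.I + ((-b : ℝ) * r * Complex.I) ^ 2 / 2)) -
      (Complex.exp (-(r : ℂ) ^ 2 / 2) - (1 + -(r : ℂ) ^ 2 / 2)) := by
    have c1 : (1 - (α : ℂ)) * a - α * b = 0 := by exact_mod_cast congrArg (Complex.ofReal) m1
    have c2 : (1 - (α : ℂ)) * a ^ 2 + α * b ^ 2 = 1 := by
      exact_mod_cast congrArg (Complex.ofReal) m2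
    simp only [stepChar, ← ha, ← hb, Complex.ofReal_neg, Complex.ofReal_sub, Complex.ofReal_one,
      mul_pow, Complex.I_sq]
    linear_combination (r * Complex.I) * c1 - (r : ℂ) ^ 2 / 2 * c2
  rw [key]
  refine (norm_sub_le _ _).trans ?_
  have q1 : ‖((1 - α : ℝ) : ℂ) * (Complex.exp (a * r * Complex.I) -
        (1 + a * r * Complex.I + (a * r * Complex.I) ^ 2 / 2))‖ ≤ a ^ 3 * Real.exp a * |r| ^ 3 := by
    rw [norm_mul, Complex.norm_real, Real.norm_of_nonneg (by linarith)]
    exact (mul_le_of_le_one_left (norm_nonneg _) (by linarith)).trans E1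
  have q2 : ‖(α : ℂ) * (Complex.exp ((-b : ℝ) * r * Complex.I) -
        (1 + (-b : ℝ) * r * Complex.I + ((-b : ℝ) * r * Complex.I) ^ 2 / 2))‖ ≤
        b ^ 3 * Real.exp b * |r| ^ 3 := by
    rw [norm_mul, Complex.norm_real, Real.norm_of_nonneg (by linarith)]
    exact (mul_le_of_le_one_left (norm_nonneg _) (by linarith)).trans E2
  have q3 := norm_add_le (((1 - α : ℝ) : ℂ) * (Complex.exp (a * r * Complex.I) -
        (1 + a * r * Complex.I + (a * r * Complex.I) ^ 2 / 2)))
      ((α : ℂ) * (Complex.exp ((-b : ℝ) * r * Complex.I) -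
        (1 + (-b : ℝ) * r * Complex.I + ((-b : ℝ) * r * Complex.I) ^ 2 / 2)))
  linarith

/-- The conditioning sequence `Y` is arbitrary: the error is at most `C |t| ^ 3 / √n`, whatever
the bits of `Y n` are. -/
lemma tendsto_charFun_law {α : ℝ} (h0 : 0 < α) (h1 : α < 1) (Y : ∀ n, Fin n → Bool) (t : ℝ) :
    Tendsto (fun n => charFun (law α (Y n)) t) atTop (𝓝 (charFun (gaussianReal 0 1) t)) := by
  obtain ⟨C, hC0, hC⟩ := exists_stepChar_bound h0 h1
  rw [tendsto_iff_norm_sub_tendsto_zero]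
  have hlim : Tendsto (fun n : ℕ => C * |t| ^ 3 * (√n)⁻¹) atTop (𝓝 0) := by
    rw [← mul_zero (C * |t| ^ 3)]
    exact (tendsto_inv_atTop_zero.comp
      (Real.tendsto_sqrt_atTop.comp tendsto_natCast_atTop_atTop)).const_mul _
  refine squeeze_zero' (.of_forall fun _ => norm_nonneg _) ?_ hlim
  filter_upwards [eventually_ge_atTop 1, eventually_ge_atTop ⌈t ^ 2⌉₊] with n hn1 hnt
  have hn : (0 : ℝ) < n := by exact_mod_cast hn1
  have hsn : 0 < √(n : ℝ) := Real.sqrt_pos.2 hn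
  have hsq : √(n : ℝ) ^ 2 = n := Real.sq_sqrt hn.le
  have habs : ∀ b : Bool, |sg b * (t / √n)| = |t| / √n := by
    intro b
    rw [abs_mul, abs_div, abs_of_pos hsn]
    cases b <;> simp [sg]
  have hsmall : |t| / √n ≤ 1 := by
    rw [div_le_one hsn]
    exact Real.abs_le_sqrt (Nat.ceil_le.1 hnt)
  have hg : charFun (gaussianReal 0 1) t =
      ∏ i : Fin n, Complex.exp (-((sg (Y n i) * (t / √n) : ℝ) : ℂ) ^ 2 / 2) := by
    rw [charFun_gaussianReal, ← Complex.exp_sum]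
    congr 1
    have : ∀ i : Fin n, -((sg (Y n i) * (t / √n) : ℝ) : ℂ) ^ 2 / 2 =
        ((-(t ^ 2 / n) / 2 : ℝ) : ℂ) := by
      intro i
      rw [← Complex.ofReal_pow, ← sq_abs, habs, div_pow, hsq, sq_abs]
      push_cast; ring
    rw [Finset.sum_congr rfl fun i _ => this i]
    have hn' : (n : ℂ) ≠ 0 := by exact_mod_cast hn.ne'
    simp
    field_simp
  rw [hg, charFun_law h0.le h1.le]
  refine (norm_prod_sub_prod_le _ _ (fun i => norm_stepChar_le h0.le h1.le _) fun i => ?_).trans ?_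
  · rw [Complex.norm_exp, ← Complex.ofReal_pow, ← Complex.ofReal_neg]
    rw [show ((2 : ℂ)) = ((2 : ℝ) : ℂ) by norm_num, ← Complex.ofReal_div, Complex.ofReal_re]
    apply Real.exp_le_one_iff.2
    have := sq_nonneg (sg (Y n i) * (t / √n))
    linarith
  · calc _ ≤ ∑ _i : Fin n, C * (|t| / √n) ^ 3 := by
          refine Finset.sum_le_sum fun i _ => ?_
          have := hC (sg (Y n i) * (t / √n)) (by rw [habs]; exact hsmall)
          rwa [habs] at this
      _ = C * |t| ^ 3 * (√n)⁻¹ := by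
          rw [Finset.sum_const, Finset.card_univ, Fintype.card_fin, nsmul_eq_mul]
          nth_rewrite 1 [← hsq]
          field_simp

/-- Central limit theorem for the conditional laws, along any sequence of conditioning vectors. -/
lemma tendsto_law {α : ℝ} (h0 : 0 < α) (h1 : α < 1) (Y : ∀ n, Fin n → Bool) :
    Tendsto (β := ProbabilityMeasure ℝ) (fun n => (⟨law α (Y n), isProbabilityMeasure_law h0.le h1.le _⟩ :
      ProbabilityMeasure ℝ)) atTop (𝓝 (⟨gaussianReal 0 1, inferInstance⟩ : ProbabilityMeasure ℝ)) :=
  ProbabilityMeasure.tendsto_iff_tendsto_charFun.2 fun t => tendsto_charFun_law h0 h1 Y t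

/-! ### The Gaussian tail function -/

lemma stdPdf_eq : stdPdf = gaussianPDFReal 0 1 := by
  ext t
  simp [stdPdf, gaussianPDFReal, div_eq_inv_mul]

lemma gaussQ_eq (a : ℝ) : gaussQ a = (gaussianReal 0 1).real (Set.Ioi a) := by
  rw [measureReal_def, gaussianReal_apply_eq_integral _ one_ne_zero, gaussQ, stdPdf_eq,
    ENNReal.toReal_ofReal (integral_nonneg fun x => gaussianPDFReal_nonneg _ _ x)]

lemma gaussQ_nonneg (a : ℝ) : 0 ≤ gaussQ a := by rw [gaussQ_eq]; exact measureReal_nonneg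

lemma gaussQ_le_one (a : ℝ) : gaussQ a ≤ 1 := by rw [gaussQ_eq]; exact measureReal_le_one

lemma stdPdf_le_one (t : ℝ) : stdPdf t ≤ 1 := by
  unfold stdPdf
  rw [div_le_one (by positivity)]
  have h1 : Real.exp (-t ^ 2 / 2) ≤ 1 := Real.exp_le_one_iff.2 (by nlinarith [sq_nonneg t])
  refine h1.trans (Real.one_le_sqrt.2 ?_)
  nlinarith [Real.pi_gt_three]

/-- `gaussQ` decreases at rate at most `1`, because the Gaussian density is at most `1`. -/
lemma gaussQ_le_add {a b : ℝ} (hab : a ≤ b) : gaussQ a ≤ gaussQ b + (b - a) := by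
  have hpdf : Integrable stdPdf := stdPdf_eq ▸ integrable_gaussianPDFReal 0 1
  have h : gaussQ a = (∫ s in Set.Ioc a b, stdPdf s) + gaussQ b := by
    unfold gaussQ
    rw [← Set.Ioc_union_Ioi_eq_Ioi hab]
    exact setIntegral_union (Set.Ioc_disjoint_Ioi le_rfl) measurableSet_Ioi hpdf.integrableOn
      hpdf.integrableOn
  have h2 : ∫ s in Set.Ioc a b, stdPdf s ≤ ∫ _s in Set.Ioc a b, (1 : ℝ) :=
    integral_mono hpdf.integrableOn (by simp) stdPdf_le_one
  have h3 : ∫ _s in Set.Ioc a b, (1 : ℝ) = b - a := by simp [hab]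
  linarith

lemma gaussQ_antitone {a b : ℝ} (hab : a ≤ b) : gaussQ b ≤ gaussQ a := by
  rw [gaussQ_eq, gaussQ_eq]
  exact measureReal_mono (Set.Ioi_subset_Ioi hab)

lemma continuous_gaussQ : Continuous gaussQ := by
  refine LipschitzWith.continuous (K := 1) (LipschitzWith.of_dist_le_mul fun a b => ?_)
  rw [Real.dist_eq, Real.dist_eq, NNReal.coe_one, one_mul]
  rcases le_total a b with h | h
  · rw [abs_of_nonneg (sub_nonneg.2 (gaussQ_antitone h)), abs_of_nonpos (by linarith)]
    linarith [gaussQ_le_add h]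
  · rw [abs_of_nonpos (sub_nonpos.2 (gaussQ_antitone h)), abs_of_nonneg (by linarith)]
    linarith [gaussQ_le_add h]

lemma gaussQ_neg (a : ℝ) : gaussQ (-a) = 1 - gaussQ a := by
  have : NullSingletonClass (gaussianReal 0 1) := nullSingletonClass_gaussianReal one_ne_zero
  have hsymm : (gaussianReal 0 1).real (Set.Ioi (-a)) = (gaussianReal 0 1).real (Set.Iio a) := by
    have h := gaussianReal_map_neg (μ := 0) (v := 1)
    rw [neg_zero] at h
    nth_rewrite 1 [← h]
    rw [map_measureReal_apply measurable_neg measurableSet_Ioi]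
    simp
  rw [gaussQ_eq, gaussQ_eq, hsymm, ← Set.compl_Ici, measureReal_compl measurableSet_Ici,
    probReal_univ, measureReal_congr Ioi_ae_eq_Ici]

/-! ### Uniform convergence of tail probabilities -/

lemma thickening_Ioi_subset (a c : ℝ) : Metric.thickening c (Set.Ioi a) ⊆ Set.Ioi (a - c) := by
  intro x hx
  obtain ⟨z, hz, hxz⟩ := Metric.mem_thickening_iff.1 hx
  rw [Real.dist_eq] at hxz
  have := (abs_lt.1 hxz).1
  simp only [Set.mem_Ioi] at *
  linarith

/-- A Lévy–Prokhorov bound controls all tail probabilities at once when the limit has a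
Lipschitz tail function (a quantitative form of Pólya's theorem). -/
lemma abs_tail_sub_gaussQ_le {μ : Measure ℝ} [IsProbabilityMeasure μ] {c : ℝ} (hc : 0 < c)
    (h : levyProkhorovEDist μ (gaussianReal 0 1) < ENNReal.ofReal c) (a : ℝ) :
    |μ.real (Set.Ioi a) - gaussQ a| ≤ 2 * c := by
  have tr : ∀ (ν κ : Measure ℝ) [IsProbabilityMeasure ν] [IsProbabilityMeasure κ] (b : ℝ),
      ν (Set.Ioi b) ≤ κ (Metric.thickening (ENNReal.ofReal c).toReal (Set.Ioi b)) +
        ENNReal.ofReal c → ν.real (Set.Ioi b) ≤ κ.real (Set.Ioi (b - c)) + c := by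
    intro ν κ _ _ b hb
    rw [ENNReal.toReal_ofReal hc.le] at hb
    have h2 := hb.trans (add_le_add_left (measure_mono (thickening_Ioi_subset b c)) _)
    have h3 := ENNReal.toReal_mono (by simp) h2
    rwa [ENNReal.toReal_add (by simp) (by simp), ENNReal.toReal_ofReal hc.le] at h3
  have u1 := tr _ _ a (left_measure_le_of_levyProkhorovEDist_lt h measurableSet_Ioi)
  have u2 := tr _ _ (a + c) (right_measure_le_of_levyProkhorovEDist_lt h measurableSet_Ioi)
  rw [← gaussQ_eq] at u1 u2
  rw [add_sub_cancel_right] at u2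
  have u3 := gaussQ_le_add (a := a - c) (b := a) (by linarith)
  have u4 := gaussQ_le_add (a := a) (b := a + c) (by linarith)
  rw [abs_le]
  constructor <;> linarith

/-- Convergence along every sequence of conditioning vectors is convergence uniform in the
conditioning vector. -/
lemma uniform_tail {α : ℝ} (h0 : 0 < α) (h1 : α < 1) {δ : ℝ} (hδ : 0 < δ) :
    ∃ N : ℕ, ∀ n, N ≤ n → ∀ (y : Fin n → Bool) (a : ℝ),
      |(law α y).real (Set.Ioi a) - gaussQ a| ≤ δ := by
  classical
  by_contra! hcon
  -- a sequence `Y` choosing a bad vector whenever there is one contradicts `tendsto_law`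
  let bad : ∀ n, (Fin n → Bool) → Prop := fun n y =>
    ∃ a : ℝ, δ < |(law α y).real (Set.Ioi a) - gaussQ a|
  let Y : ∀ n, Fin n → Bool := fun n => if h : ∃ y, bad n y then h.choose else fun _ => true
  have hY : ∀ n, (∃ y, bad n y) → bad n (Y n) := by
    intro n h
    simp only [Y, dif_pos h]
    exact h.choose_spec
  have hT := (LevyProkhorov.continuous_ofMeasure_probabilityMeasure (Ω := ℝ)).continuousAt.tendsto.comp
    (tendsto_law h0 h1 Y)
  have hev := (EMetric.tendsto_nhds.1 hT) (ENNReal.ofReal (δ / 2)) (by simpa using hδ)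
  obtain ⟨N, hN⟩ := eventually_atTop.1 hev
  obtain ⟨n, hn, y, a, hy⟩ := hcon N
  obtain ⟨b, hb⟩ := hY n ⟨y, a, hy⟩
  have hd := hN n hn
  change levyProkhorovEDist (law α (Y n)) (gaussianReal 0 1) < ENNReal.ofReal (δ / 2) at hd
  have := isProbabilityMeasure_law h0.le h1.le (Y n)
  have := abs_tail_sub_gaussQ_le (μ := law α (Y n)) (by positivity : 0 < δ / 2) hd b
  linarith

/-! ### Binary entropy -/

lemma binEnt_eq (p : ℝ) : binEnt p = Real.binEntropy p / Real.log 2 := by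
  simp only [binEnt, Real.binEntropy, Real.logb, Real.log_inv]
  ring

lemma continuous_binEnt : Continuous binEnt := by
  rw [funext binEnt_eq]
  exact Real.binEntropy_continuous.div_const _

lemma binEnt_one_sub (p : ℝ) : binEnt (1 - p) = binEnt p := by
  rw [binEnt_eq, binEnt_eq, Real.binEntropy_one_sub]

lemma binEnt_nonneg {p : ℝ} (h0 : 0 ≤ p) (h1 : p ≤ 1) : 0 ≤ binEnt p := by
  rw [binEnt_eq]
  exact div_nonneg (Real.binEntropy_nonneg h0 h1) (Real.log_nonneg (by norm_num))

lemma binEnt_le_one (p : ℝ) : binEnt p ≤ 1 := by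
  rw [binEnt_eq, div_le_one (Real.log_pos (by norm_num))]
  exact Real.binEntropy_le_log_two

/-! ### Majority and the conditional entropy -/

/-- The `±1`-sum of `y` divided by `√n`. -/
def normSum {n : ℕ} (y : Fin n → Bool) : ℝ := (∑ i, sg (y i)) / √n

lemma sum_sg {n : ℕ} (x : Fin n → Bool) : ∑ i, sg (x i) = 2 * (hw x : ℝ) - n := by
  have : ∀ b : Bool, sg b = 2 * (if b = true then 1 else 0) - 1 := by
    intro b; cases b <;> norm_num [sg]
  simp only [this, Finset.sum_sub_distrib, ← Finset.mul_sum]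
  simp [hw]

lemma majF_eq_true_iff {n : ℕ} (x : Fin n → Bool) : majF n x = true ↔ 0 < ∑ i, sg (x i) := by
  rw [sum_sg, majF, decide_eq_true_iff, sub_pos]
  norm_cast

/-- Majority is a threshold event for `stat`: adding back the conditional mean given `y` leaves the
`±1`-sum of `x`, which is positive exactly when `maj x = 1`. -/
lemma stat_mem_iff {n : ℕ} (hn : 1 ≤ n) {α : ℝ} (h0 : 0 < α) (h1 : α < 1) (y x : Fin n → Bool) :
    stat α y x ∈ Set.Ioi (-(normSum y * (1 - 2 * α) / √(4 * α * (1 - α)))) ↔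
      majF n x = true := by
  have hσ : 0 < √(4 * α * (1 - α)) := Real.sqrt_pos.2 (by nlinarith)
  have hsn : 0 < √(n : ℝ) := Real.sqrt_pos.2 (by exact_mod_cast hn)
  rw [majF_eq_true_iff, Set.mem_Ioi, ← sub_pos]
  have : stat α y x - -(normSum y * (1 - 2 * α) / √(4 * α * (1 - α))) =
      (∑ i, sg (x i)) / (√n * √(4 * α * (1 - α))) := by
    rw [stat, normSum, Finset.sum_sub_distrib, ← Finset.mul_sum]
    field_simp
    ring
  rw [this, div_pos_iff_of_pos_right (mul_pos hsn hσ)]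

/-- The posterior probability `P[maj(X^n) = 1 | Y^n = y]`. -/
def majProb {n : ℕ} (α : ℝ) (y : Fin n → Bool) : ℝ :=
  ∑ x, if majF n x = true then chanWt α y x else 0

lemma majProb_eq_tail {n : ℕ} (hn : 1 ≤ n) {α : ℝ} (h0 : 0 < α) (h1 : α < 1)
    (y : Fin n → Bool) :
    majProb α y =
      (law α y).real (Set.Ioi (-(normSum y * (1 - 2 * α) / √(4 * α * (1 - α))))) := by
  classical
  rw [law_real h0.le h1.le y measurableSet_Ioi, majProb]
  simp only [stat_mem_iff hn h0 h1]

lemma majProb_false {n : ℕ} (α : ℝ) (y : Fin n → Bool) :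
    ∑ x, (if majF n x = false then chanWt α y x else 0) = 1 - majProb α y := by
  rw [← sum_chanWt α y, majProb, ← Finset.sum_sub_distrib]
  refine Finset.sum_congr rfl fun x _ => ?_
  cases majF n x <;> simp

lemma noisyPMF_eq {n : ℕ} (α : ℝ) (c : Bool) (y : Fin n → Bool) :
    noisyPMF n α (majF n) c y = ((2 : ℝ) ^ n)⁻¹ * (if c then majProb α y else 1 - majProb α y) := by
  have : noisyPMF n α (majF n) c y =
      ((2 : ℝ) ^ n)⁻¹ * ∑ x, if majF n x = c then chanWt α y x else 0 := by
    simp only [noisyPMF, chanWt, Finset.mul_sum, mul_ite, mul_zero]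
  rw [this]
  cases c
  · rw [majProb_false]; simp
  · simp [majProb]

lemma condEntBool_eq (n : ℕ) (α : ℝ) :
    condEntBool (fun (y : Fin n → Bool) (c : Bool) => noisyPMF n α (majF n) c y) =
      ∑ y : Fin n → Bool, ((2 : ℝ) ^ n)⁻¹ * binEnt (majProb α y) := by
  unfold condEntBool
  refine Finset.sum_congr rfl fun y _ => ?_
  have hp : ((2 : ℝ) ^ n)⁻¹ ≠ 0 := by positivity
  have hd : ∀ q : ℝ, ((2 : ℝ) ^ n)⁻¹ * q / ((2 : ℝ) ^ n)⁻¹ = q := fun q =>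
    mul_div_cancel_left₀ q hp
  have hs : ((2 : ℝ) ^ n)⁻¹ * majProb α y + ((2 : ℝ) ^ n)⁻¹ * (1 - majProb α y) =
      ((2 : ℝ) ^ n)⁻¹ := by ring
  simp only [noisyPMF_eq, Fintype.sum_bool, if_true, Bool.false_eq_true, if_false, hs, hd, binEnt]
  ring

/-- For `α = 1/2` the vector `X^n` is uniform given `Y^n`, so `law (1/2)` is the distribution of
`normSum` under the uniform distribution. -/
lemma integral_law_half {n : ℕ} (f : ℝ → ℝ) :
    ∫ t, f t ∂law (1 / 2) (fun _ : Fin n => true) =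
      ∑ y : Fin n → Bool, ((2 : ℝ) ^ n)⁻¹ * f (normSum y) := by
  rw [integral_law (by norm_num) (by norm_num)]
  refine Finset.sum_congr rfl fun y _ => ?_
  have h1 : chanWt (1 / 2) (fun _ : Fin n => true) y = ((2 : ℝ) ^ n)⁻¹ := by
    unfold chanWt
    norm_num
  have h2 : stat (1 / 2) (fun _ : Fin n => true) y = normSum y := by
    unfold stat normSum
    norm_num
  rw [h1, h2, smul_eq_mul]

lemma binEnt_gaussQ_abs (u k : ℝ) :
    binEnt (gaussQ (|u| * k)) = binEnt (gaussQ (-(u * k))) := by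
  rcases le_total 0 u with h | h
  · rw [abs_of_nonneg h, gaussQ_neg, binEnt_one_sub]
  · rw [abs_of_nonpos h, neg_mul]

lemma tendsto_sum_entropy (k : ℝ) :
    Tendsto (fun n : ℕ => ∑ y : Fin n → Bool,
      ((2 : ℝ) ^ n)⁻¹ * binEnt (gaussQ (-(normSum y * k)))) atTop
      (𝓝 (∫ t, stdPdf t * binEnt (gaussQ (|t| * k)))) := by
  have hcont : Continuous fun t : ℝ => binEnt (gaussQ (-(t * k))) :=
    continuous_binEnt.comp (continuous_gaussQ.comp (by fun_prop))
  let F : BoundedContinuousFunction ℝ ℝ := BoundedContinuousFunction.ofNormedAddCommGroup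
    (fun t : ℝ => binEnt (gaussQ (-(t * k)))) hcont 1 fun t => by
      rw [Real.norm_of_nonneg (binEnt_nonneg (gaussQ_nonneg _) (gaussQ_le_one _))]
      exact binEnt_le_one _
  have h := ProbabilityMeasure.tendsto_iff_forall_integral_tendsto.1
    (tendsto_law (α := 1 / 2) (by norm_num) (by norm_num) fun _ _ => true) F
  convert h using 2
  · exact (integral_law_half fun t => binEnt (gaussQ (-(t * k)))).symm
  · change _ = ∫ t, binEnt (gaussQ (-(t * k))) ∂gaussianReal 0 1
    rw [integral_gaussianReal_eq_integral_smul one_ne_zero, stdPdf_eq]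
    simp only [binEnt_gaussQ_abs, smul_eq_mul]

end

theorem stmt18 (α : ℝ) (hα0 : 0 < α) (hα1 : α < 1/2) :
    ∀ ε : ℝ, 0 < ε → ∃ N : ℕ, ∀ n : ℕ, N ≤ n → Odd n →
      |condEntBool (fun (y : Fin n → Bool) (c : Bool) => noisyPMF n α (majF n) c y) -
        ∫ t : ℝ, stdPdf t * binEnt (gaussQ (|t| * (1 - 2*α) / Real.sqrt (4*α*(1-α))))| ≤ ε := by
  intro ε hε
  have h1 : α < 1 := by linarith
  have hUC : UniformContinuousOn binEnt (Set.Icc 0 1) :=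
    isCompact_Icc.uniformContinuousOn_of_continuous continuous_binEnt.continuousOn
  obtain ⟨δ, hδ, hδε⟩ := Metric.uniformContinuousOn_iff.1 hUC (ε / 2) (by positivity)
  obtain ⟨N₁, hN₁⟩ := uniform_tail hα0 h1 (half_pos hδ)
  obtain ⟨N₂, hN₂⟩ := Metric.tendsto_atTop.1
    (tendsto_sum_entropy ((1 - 2 * α) / √(4 * α * (1 - α)))) (ε / 2) (by positivity)
  refine ⟨max 1 (max N₁ N₂), fun n hn _ => ?_⟩
  have hn1 : 1 ≤ n := le_of_max_le_left hn
  have hnN₁ : N₁ ≤ n := le_of_max_le_left (le_of_max_le_right hn)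
  have hnN₂ : N₂ ≤ n := le_of_max_le_right (le_of_max_le_right hn)
  have hb := (hN₂ n hnN₂).le
  simp only [Real.dist_eq, ← mul_div_assoc] at hb
  -- replace each posterior by its Gaussian approximation, using uniform continuity of `binEnt`
  have ha : |condEntBool (fun (y : Fin n → Bool) (c : Bool) => noisyPMF n α (majF n) c y) -
      ∑ y : Fin n → Bool, ((2 : ℝ) ^ n)⁻¹ *
        binEnt (gaussQ (-(normSum y * (1 - 2 * α) / √(4 * α * (1 - α)))))| ≤ ε / 2 := by
    rw [condEntBool_eq, ← Finset.sum_sub_distrib]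
    refine (Finset.abs_sum_le_sum_abs _ _).trans ?_
    calc _ ≤ ∑ _y : Fin n → Bool, ((2 : ℝ) ^ n)⁻¹ * (ε / 2) := by
          refine Finset.sum_le_sum fun y _ => ?_
          have := isProbabilityMeasure_law hα0.le h1.le y
          have ht := hN₁ n hnN₁ y (-(normSum y * (1 - 2 * α) / √(4 * α * (1 - α))))
          rw [← mul_sub, abs_mul, abs_of_pos (by positivity)]
          refine mul_le_mul_of_nonneg_left ?_ (by positivity)
          rw [majProb_eq_tail hn1 hα0 h1]
          refine (hδε _ ⟨measureReal_nonneg, measureReal_le_one⟩ _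
            ⟨gaussQ_nonneg _, gaussQ_le_one _⟩ ?_).le
          exact ht.trans_lt (half_lt_self hδ)
      _ = ε / 2 := by simp
  have := abs_sub_le
    (condEntBool (fun (y : Fin n → Bool) (c : Bool) => noisyPMF n α (majF n) c y))
    (∑ y : Fin n → Bool, ((2 : ℝ) ^ n)⁻¹ *
        binEnt (gaussQ (-(normSum y * (1 - 2 * α) / √(4 * α * (1 - α))))))
    (∫ t : ℝ, stdPdf t * binEnt (gaussQ (|t| * (1 - 2*α) / Real.sqrt (4*α*(1-α)))))
  linarith
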